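/- arXiv:1202.0472 — 5 statements merged into one kernel-verified Lean document; each statement's English description precedes it below -/
import Mathlib

section
/- Let a_n = 2^{−nⁿ·n³} and F = (⋃_{n∈ℕ} [a_{2n}/2, a_{2n}]×{0}) ∪ (⋃_{n∈ℕ} {0}×[a_{2n−1}/2, a_{2n−1}]) ⊂ ℝ². Then I_p^1(F) < ∞ for every p ∈ (0,∞). -/
open MeasureTheory Metric Set Filter
open scoped ENNReal Topology Classical

noncomputable section

/-- The affine line through `x` and `y`. -/
def lineThrough {n : ℕ} (x y : EuclideanSpace ℝ (Fin n)) : Set (EuclideanSpace ℝ (Fin n)) :=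
  {p | ∃ t : ℝ, p = x + t • (y - x)}

/-- The inverse circumradius `κ(x,y,z)` of a triple of points, set to `0` when the
points are not pairwise distinct. -/
def kappa {n : ℕ} (x y z : EuclideanSpace ℝ (Fin n)) : ℝ≥0∞ :=
  if x ≠ y ∧ y ≠ z ∧ x ≠ z then
    ENNReal.ofReal (2 * Metric.infDist z (lineThrough x y) / (‖x - z‖ * ‖y - z‖))
  else 0

/-- `κ_G(x) = sup_{v,w ∈ X} κ(x,v,w)`. -/
def kappaG {n : ℕ} (X : Set (EuclideanSpace ℝ (Fin n))) (x : EuclideanSpace ℝ (Fin n)) : ℝ≥0∞ :=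
  ⨆ v ∈ X, ⨆ w ∈ X, kappa x v w

/-- `κ_i(x,y) = sup_{z ∈ X} κ(x,y,z)`. -/
def kappaI {n : ℕ} (X : Set (EuclideanSpace ℝ (Fin n))) (x y : EuclideanSpace ℝ (Fin n)) : ℝ≥0∞ :=
  ⨆ z ∈ X, kappa x y z

/-- The energy `U_p^α(X) = ∫_X κ_G(x)^p dH^α(x)`. -/
def energyU {n : ℕ} (p α : ℝ) (X : Set (EuclideanSpace ℝ (Fin n))) : ℝ≥0∞ :=
  ∫⁻ x in X, kappaG X x ^ p ∂ μH[α]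

/-- The energy `I_p^α(X) = ∫_X ∫_X κ_i(x,y)^p dH^α(x) dH^α(y)`. -/
def energyI {n : ℕ} (p α : ℝ) (X : Set (EuclideanSpace ℝ (Fin n))) : ℝ≥0∞ :=
  ∫⁻ y in X, ∫⁻ x in X, kappaI X x y ^ p ∂ μH[α] ∂ μH[α]

/-- The integral Menger curvature `M_p^α(X)`. -/
def energyM {n : ℕ} (p α : ℝ) (X : Set (EuclideanSpace ℝ (Fin n))) : ℝ≥0∞ :=
  ∫⁻ z in X, ∫⁻ y in X, ∫⁻ x in X, kappa x y z ^ p ∂ μH[α] ∂ μH[α] ∂ μH[α]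

/-- The open double cone about `x` in direction `s` with opening angle `ε`. -/
def cone {n : ℕ} (s : EuclideanSpace ℝ (Fin n)) (ε : ℝ) (x : EuclideanSpace ℝ (Fin n)) :
    Set (EuclideanSpace ℝ (Fin n)) :=
  {y | y ≠ x ∧
    min (InnerProductGeometry.angle (y - x) s) (InnerProductGeometry.angle (y - x) (-s)) < ε}

/-- `X` has an approximate `α`-tangent at `x`. -/
def HasApproxTangent {n : ℕ} (α : ℝ) (X : Set (EuclideanSpace ℝ (Fin n)))
    (x : EuclideanSpace ℝ (Fin n)) : Prop :=
  ∃ s : EuclideanSpace ℝ (Fin n), ‖s‖ = 1 ∧ ∀ ε > (0:ℝ),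
    Filter.Tendsto
      (fun r : ℝ => μH[α] ((X \ cone s ε x) ∩ Metric.closedBall x r) / ENNReal.ofReal (2 * r) ^ α)
      (𝓝[>] 0) (𝓝 0)

/-- `X` has a weak approximate `α`-tangent at `x`. -/
def HasWeakApproxTangent {n : ℕ} (α : ℝ) (X : Set (EuclideanSpace ℝ (Fin n)))
    (x : EuclideanSpace ℝ (Fin n)) : Prop :=
  ∃ ρ > (0:ℝ), ∃ s : ℝ → EuclideanSpace ℝ (Fin n), (∀ r ∈ Set.Ioo (0:ℝ) ρ, ‖s r‖ = 1) ∧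
    ∀ ε > (0:ℝ),
      Filter.Tendsto
        (fun r : ℝ =>
          μH[α] ((X \ cone (s r) ε x) ∩ Metric.closedBall x r) / ENNReal.ofReal (2 * r) ^ α)
        (𝓝[>] 0) (𝓝 0)

/-- Lower `α`-density of `X` at `x`. -/
def lowerDensity {n : ℕ} (α : ℝ) (X : Set (EuclideanSpace ℝ (Fin n)))
    (x : EuclideanSpace ℝ (Fin n)) : ℝ≥0∞ :=
  Filter.liminf
    (fun r : ℝ => μH[α] (X ∩ Metric.closedBall x r) / ENNReal.ofReal (2 * r) ^ α) (𝓝[>] 0)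

/-- Upper `α`-density of `X` at `x`. -/
def upperDensity {n : ℕ} (α : ℝ) (X : Set (EuclideanSpace ℝ (Fin n)))
    (x : EuclideanSpace ℝ (Fin n)) : ℝ≥0∞ :=
  Filter.limsup
    (fun r : ℝ => μH[α] (X ∩ Metric.closedBall x r) / ENNReal.ofReal (2 * r) ^ α) (𝓝[>] 0)


/-- `a_n = 2 ^ (-(n^n * n^3))`. -/
def aseq (n : ℕ) : ℝ := ((2 : ℝ) ^ (n ^ n * n ^ 3))⁻¹

/-- The set `F = (⋃_{n ≥ 1} [a_{2n}/2, a_{2n}] × {0}) ∪ (⋃_{n ≥ 1} {0} × [a_{2n-1}/2, a_{2n-1}])`. -/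
def Fset : Set (EuclideanSpace ℝ (Fin 2)) :=
  {p | ∃ n : ℕ, 1 ≤ n ∧ p 1 = 0 ∧ p 0 ∈ Set.Icc (aseq (2 * n) / 2) (aseq (2 * n))} ∪
  {p | ∃ n : ℕ, 1 ≤ n ∧ p 0 = 0 ∧ p 1 ∈ Set.Icc (aseq (2 * n - 1) / 2) (aseq (2 * n - 1))}


local notation "E2" => EuclideanSpace ℝ (Fin 2)

/-! ### The sequence -/

lemma expo_step (n : ℕ) : (n + 1) * (n ^ n * n ^ 3) ≤ (n + 1) ^ (n + 1) * (n + 1) ^ 3 := by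
  have h1 : n ^ n ≤ (n + 1) ^ n := Nat.pow_le_pow_left (by omega) n
  have h2 : n ^ 3 ≤ (n + 1) ^ 3 := Nat.pow_le_pow_left (by omega) 3
  calc (n + 1) * (n ^ n * n ^ 3) ≤ (n + 1) * ((n + 1) ^ n * (n + 1) ^ 3) := by gcongr
    _ = _ := by ring

lemma expo_step2 (n : ℕ) (hn : 1 ≤ n) :
    2 * (n ^ n * n ^ 3) + 2 ≤ (n + 1) ^ (n + 1) * (n + 1) ^ 3 := by
  have h0 : 1 ≤ n ^ n := Nat.one_le_pow _ _ hn
  have h1 : n ^ n ≤ (n + 1) ^ n := Nat.pow_le_pow_left (by omega) n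
  have h2 : n ^ 3 + 1 ≤ (n + 1) ^ 3 := by nlinarith [sq_nonneg n]
  calc 2 * (n ^ n * n ^ 3) + 2 ≤ 2 * (n ^ n * (n ^ 3 + 1)) := by nlinarith
    _ ≤ (n + 1) * ((n + 1) ^ n * (n + 1) ^ 3) := by gcongr; omega
    _ = _ := by ring

lemma expo_ge (n : ℕ) : n ≤ n ^ n * n ^ 3 := by
  rcases Nat.eq_zero_or_pos n with h | h
  · omega
  · have h0 : 1 ≤ n ^ n := Nat.one_le_pow _ _ h
    have h1 : n ≤ n ^ 3 := Nat.le_self_pow (by norm_num) n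
    nlinarith

lemma aseq_pos (n : ℕ) : 0 < aseq n := by unfold aseq; positivity

lemma aseq_le_one (n : ℕ) : aseq n ≤ 1 := by
  unfold aseq
  exact inv_le_one_of_one_le₀ (one_le_pow₀ (by norm_num))

lemma aseq_sq (n : ℕ) (hn : 1 ≤ n) : 4 * aseq (n + 1) ≤ aseq n ^ 2 := by
  unfold aseq
  rw [← inv_pow, ← inv_pow, ← pow_mul]
  have : ((2:ℝ)⁻¹) ^ ((n + 1) ^ (n + 1) * (n + 1) ^ 3) ≤ (2:ℝ)⁻¹ ^ (2 * (n ^ n * n ^ 3) + 2) :=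
    pow_le_pow_of_le_one (by norm_num) (by norm_num) (expo_step2 n hn)
  rw [pow_add _ (2 * _) 2, mul_comm 2] at this
  linarith

lemma aseq_anti : Antitone aseq := by
  apply antitone_nat_of_succ_le
  intro n
  rcases Nat.eq_zero_or_pos n with h | h
  · subst h
    simpa [aseq] using aseq_le_one 1
  · nlinarith [aseq_sq n h, aseq_pos n, aseq_pos (n + 1), aseq_le_one n]

lemma aseq_quarter {n m : ℕ} (hn : 1 ≤ n) (h : n < m) : 4 * aseq m ≤ aseq n := by
  have h1 := aseq_sq n hn
  have h2 : aseq m ≤ aseq (n + 1) := aseq_anti h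
  nlinarith [aseq_pos n, aseq_le_one n]

lemma summable_w (p : ℝ) : Summable (fun k => (8 / aseq k) ^ p * aseq (k + 1)) := by
  obtain ⟨N, hN⟩ := exists_nat_ge p
  have hs : Summable (fun k : ℕ => 8 ^ p * ((2:ℝ)⁻¹) ^ k) :=
    (summable_geometric_of_lt_one (by norm_num) (by norm_num)).mul_left _
  refine Summable.of_norm_bounded_eventually_nat hs ?_
  filter_upwards [eventually_ge_atTop N] with k hk
  have hp0 := aseq_pos k
  rw [Real.norm_of_nonneg (mul_nonneg (Real.rpow_nonneg (by positivity) _) (aseq_pos _).le),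
    Real.div_rpow (by norm_num) hp0.le, div_mul_eq_mul_div, mul_div_assoc]
  gcongr
  rw [div_le_iff₀ (by positivity)]
  have h1 : aseq (k + 1) ≤ aseq k ^ (k + 1) := by
    unfold aseq
    rw [← inv_pow, ← inv_pow, ← pow_mul]
    apply pow_le_pow_of_le_one (by norm_num) (by norm_num)
    rw [mul_comm]
    exact expo_step k
  have h2 : aseq k ^ k ≤ aseq k ^ p := by
    rw [← Real.rpow_natCast]
    apply Real.rpow_le_rpow_of_exponent_ge hp0 (aseq_le_one k)
    exact hN.trans (by exact_mod_cast hk)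
  have h3 : aseq k ≤ (2:ℝ)⁻¹ ^ k := by
    unfold aseq
    rw [← inv_pow]
    exact pow_le_pow_of_le_one (by norm_num) (by norm_num) (expo_ge k)
  calc aseq (k + 1) ≤ aseq k ^ (k + 1) := h1
    _ = aseq k * aseq k ^ k := by ring
    _ ≤ _ := by gcongr

/-! ### The pieces of the set -/

/-- The axis on which the `n`-th segment lies. -/
def axisIdx (n : ℕ) : Fin 2 := if n % 2 = 0 then 0 else 1

/-- The `n`-th segment. -/
def seg (n : ℕ) : Set E2 :=
  (fun t : ℝ => (EuclideanSpace.single (axisIdx n) t : E2)) '' Icc (aseq n / 2) (aseq n)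

lemma Fset_subset : ∀ x ∈ Fset, ∃ k, x ∈ seg (k + 1) := by
  rintro x (⟨n, hn, h1, h0⟩ | ⟨n, hn, h1, h0⟩)
  · refine ⟨2 * n - 1, x 0, ?_, ?_⟩
    · rwa [show 2 * n - 1 + 1 = 2 * n by omega]
    · rw [show 2 * n - 1 + 1 = 2 * n by omega]
      ext i
      fin_cases i <;> simp [axisIdx, h1]
  · refine ⟨2 * n - 2, x 1, ?_, ?_⟩
    · rwa [show 2 * n - 2 + 1 = 2 * n - 1 by omega]
    · rw [show 2 * n - 2 + 1 = 2 * n - 1 by omega]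
      have : (2 * n - 1) % 2 = 1 := by omega
      ext i
      fin_cases i <;> simp [axisIdx, h1, this]

lemma isometry_sgl (i : Fin 2) : Isometry (fun t : ℝ => (EuclideanSpace.single i t : E2)) :=
  Isometry.of_dist_eq fun a b => by simp

lemma measure_seg (n : ℕ) : μH[1] (seg n) ≤ ENNReal.ofReal (aseq n) := by
  unfold seg
  rw [(isometry_sgl _).hausdorffMeasure_image (Or.inl zero_le_one), hausdorffMeasure_real,
    Real.volume_Icc]
  apply ENNReal.ofReal_le_ofReal
  linarith [aseq_pos n]

lemma measurable_seg (n : ℕ) : MeasurableSet (seg n) :=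
  (isCompact_Icc.image (isometry_sgl _).continuous).measurableSet

/-! ### Curvature bounds -/

lemma norm2 (v : E2) : ‖v‖ ^ 2 = v 0 ^ 2 + v 1 ^ 2 := by
  rw [EuclideanSpace.norm_sq_eq]; simp

lemma infDist_mul_le (x y z : E2) :
    infDist z (lineThrough x y) * ‖x - y‖ ≤ ‖x - z‖ * ‖y - z‖ := by
  rcases eq_or_ne x y with h | h
  · subst h; simp; positivity
  have hD : 0 < ‖x - y‖ := norm_pos_iff.2 (sub_ne_zero.2 h)
  set t : ℝ := ((z 0 - x 0) * (y 0 - x 0) + (z 1 - x 1) * (y 1 - x 1)) / ‖x - y‖ ^ 2 with ht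
  have hq : x + t • (y - x) ∈ lineThrough x y := ⟨t, rfl⟩
  have hle := infDist_le_dist_of_mem (x := z) hq
  refine (mul_le_mul_of_nonneg_right hle hD.le).trans ?_
  apply le_of_sq_le_sq _ (by positivity)
  rw [mul_pow, mul_pow, dist_eq_norm]
  have hD2 : 0 < ‖x - y‖ ^ 2 := by positivity
  have ht' : t * ‖x - y‖ ^ 2 = (z 0 - x 0) * (y 0 - x 0) + (z 1 - x 1) * (y 1 - x 1) := by
    rw [ht]; field_simp
  clear_value t
  rw [norm2] at hD2 ht' ⊢
  rw [norm2, norm2, norm2]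
  simp only [PiLp.sub_apply, PiLp.add_apply, PiLp.smul_apply, smul_eq_mul] at *
  have key : ((z 0 - (x 0 + t * (y 0 - x 0))) ^ 2 + (z 1 - (x 1 + t * (y 1 - x 1))) ^ 2) *
      ((x 0 - y 0) ^ 2 + (x 1 - y 1) ^ 2) =
      ((z 0 - x 0) * (y 1 - x 1) - (z 1 - x 1) * (y 0 - x 0)) ^ 2 := by
    linear_combination (t * ((x 0 - y 0) ^ 2 + (x 1 - y 1) ^ 2) -
      ((z 0 - x 0) * (y 0 - x 0) + (z 1 - x 1) * (y 1 - x 1))) * ht'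
  rw [key]
  nlinarith [sq_nonneg ((x 0 - z 0) * (y 0 - z 0) + (x 1 - z 1) * (y 1 - z 1))]

lemma kappa_le_dist (x y z : E2) : kappa x y z ≤ ENNReal.ofReal (2 / ‖x - y‖) := by
  unfold kappa
  split_ifs with h
  · obtain ⟨h1, h2, h3⟩ := h
    have a1 : 0 < ‖x - y‖ := norm_pos_iff.2 (sub_ne_zero.2 h1)
    have a2 : 0 < ‖y - z‖ := norm_pos_iff.2 (sub_ne_zero.2 h2)
    have a3 : 0 < ‖x - z‖ := norm_pos_iff.2 (sub_ne_zero.2 h3)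
    apply ENNReal.ofReal_le_ofReal
    rw [div_le_div_iff₀ (by positivity) a1]
    nlinarith [infDist_mul_le x y z]
  · simp

lemma norm_single_sub_ge {i j : Fin 2} (hij : i ≠ j) (s t : ℝ) :
    |s| ≤ ‖(EuclideanSpace.single i s : E2) - EuclideanSpace.single j t‖ ∧
    |t| ≤ ‖(EuclideanSpace.single i s : E2) - EuclideanSpace.single j t‖ := by
  have : ‖(EuclideanSpace.single i s : E2) - EuclideanSpace.single j t‖ ^ 2 = s ^ 2 + t ^ 2 := by
    rw [norm2]
    fin_cases i <;> fin_cases j <;> simp at hij ⊢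
    ring
  exact ⟨abs_le_of_sq_le_sq (by nlinarith [sq_nonneg t]) (norm_nonneg _),
    abs_le_of_sq_le_sq (by nlinarith [sq_nonneg s]) (norm_nonneg _)⟩

lemma zero_mem_line {i : Fin 2} {s t : ℝ} (h : s ≠ t) (u : ℝ) :
    (EuclideanSpace.single i u : E2) ∈
      lineThrough (EuclideanSpace.single i s : E2) (EuclideanSpace.single i t) := by
  have : t - s ≠ 0 := sub_ne_zero.2 h.symm
  refine ⟨(u - s) / (t - s), ?_⟩
  ext j
  by_cases hj : j = i
  · subst hj
    simp
    field_simp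
    ring
  · simp [hj]

lemma kappa_same {n m : ℕ} (hn : 1 ≤ n) (hm : 1 ≤ m) {x y z : E2} (hx : x ∈ seg n)
    (hy : y ∈ seg n) (hz : z ∈ seg m) : kappa x y z ≤ ENNReal.ofReal (8 / aseq (n - 1)) := by
  obtain ⟨s, ⟨hs1, hs2⟩, rfl⟩ := hx
  obtain ⟨t, ⟨ht1, ht2⟩, rfl⟩ := hy
  obtain ⟨u, ⟨hu1, hu2⟩, rfl⟩ := hz
  have hn0 := aseq_pos n
  have hm0 := aseq_pos m
  have hn1 := aseq_pos (n - 1)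
  have hn2 := aseq_le_one (n - 1)
  unfold kappa
  split_ifs with h
  swap
  · simp
  have hst : s ≠ t := fun e => h.1 (by rw [e])
  apply ENNReal.ofReal_le_ofReal
  by_cases hax : axisIdx n = axisIdx m
  · rw [← hax, infDist_zero_of_mem (zero_mem_line hst u)]
    simp; positivity
  · have hd : infDist (EuclideanSpace.single (axisIdx m) u : E2) (lineThrough
        (EuclideanSpace.single (axisIdx n) s : E2) (EuclideanSpace.single (axisIdx n) t)) ≤ u := by
      refine (infDist_le_dist_of_mem (zero_mem_line hst 0)).trans ?_
      have : (EuclideanSpace.single (axisIdx n) (0:ℝ) : E2) = 0 := by ext j; simp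
      rw [this, dist_zero_right, EuclideanSpace.norm_single, Real.norm_eq_abs,
        abs_of_nonneg (show 0 ≤ u by linarith)]
    obtain ⟨a1, a2⟩ := norm_single_sub_ge hax s u
    obtain ⟨b1, b2⟩ := norm_single_sub_ge hax t u
    rw [abs_of_nonneg (by linarith)] at a1 a2 b1 b2
    have hu0 : 0 < u := by linarith
    have hs0 : 0 < s := by linarith
    have ht0 : 0 < t := by linarith
    rcases lt_trichotomy m n with hlt | heq | hgt
    · have h3 : aseq (n - 1) ≤ aseq m := aseq_anti (by omega)
      calc _ ≤ 2 * u / (u * u) := by gcongr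
        _ = 2 / u := by field_simp
        _ ≤ 2 / (aseq (n - 1) / 2) := by gcongr; linarith
        _ = 4 / aseq (n - 1) := by field_simp; norm_num
        _ ≤ _ := by gcongr; norm_num
    · exact absurd (by rw [heq]) hax
    · have h3 : aseq m ≤ aseq (n + 1) := aseq_anti hgt
      have h4 := aseq_sq n hn
      calc _ ≤ 2 * u / (s * t) := by gcongr
        _ ≤ 2 * (aseq n ^ 2 / 4) / ((aseq n / 2) * (aseq n / 2)) := by gcongr; linarith
        _ = 2 := by field_simp; norm_num
        _ ≤ 8 := by norm_num
        _ ≤ _ := by rw [le_div_iff₀ hn1]; linarith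

lemma norm_mem_seg {n : ℕ} {x : E2} (hx : x ∈ seg n) : aseq n / 2 ≤ ‖x‖ ∧ ‖x‖ ≤ aseq n := by
  obtain ⟨s, ⟨hs1, hs2⟩, rfl⟩ := hx
  have hn0 := aseq_pos n
  simp [abs_of_nonneg (show 0 ≤ s by linarith)]
  exact ⟨hs1, hs2⟩

lemma dist_seg {n m : ℕ} (hn : 1 ≤ n) (h : n < m) {x y : E2} (hx : x ∈ seg n) (hy : y ∈ seg m) :
    2 / ‖x - y‖ ≤ 8 / aseq n := by
  have h1 := norm_mem_seg hx
  have h2 := norm_mem_seg hy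
  have h3 := norm_sub_norm_le x y
  have h4 := aseq_quarter hn h
  have hn0 := aseq_pos n
  rw [div_le_div_iff₀ (by linarith) hn0]
  linarith

lemma eight_div_le {i j : ℕ} : 8 / aseq i ≤ 8 / aseq i * (8 / aseq j) ∧
    8 / aseq j ≤ 8 / aseq i * (8 / aseq j) := by
  have h (i : ℕ) : 1 ≤ 8 / aseq i := by
    rw [le_div_iff₀ (aseq_pos i)]; linarith [aseq_le_one i]
  have := h i
  have := h j
  constructor <;> nlinarith

lemma kappa_bound {i j k : ℕ} {x y z : E2} (hx : x ∈ seg (i + 1)) (hy : y ∈ seg (j + 1))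
    (hz : z ∈ seg (k + 1)) :
    kappa x y z ≤ ENNReal.ofReal (8 / aseq i) * ENNReal.ofReal (8 / aseq j) := by
  have hi := aseq_pos i
  have hj := aseq_pos j
  rw [← ENNReal.ofReal_mul (by positivity)]
  rcases lt_trichotomy i j with h | h | h
  · refine (kappa_le_dist x y z).trans (ENNReal.ofReal_le_ofReal ?_)
    refine (dist_seg (by omega) (by omega) hx hy).trans (le_trans ?_ eight_div_le.2)
    exact div_le_div_of_nonneg_left (by norm_num) hj (aseq_anti h)
  · subst h
    exact (kappa_same (by omega) (by omega) hx hy hz).trans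
      (ENNReal.ofReal_le_ofReal eight_div_le.1)
  · refine (kappa_le_dist x y z).trans (ENNReal.ofReal_le_ofReal ?_)
    rw [norm_sub_rev]
    refine (dist_seg (by omega) (by omega) hy hx).trans (le_trans ?_ eight_div_le.1)
    exact div_le_div_of_nonneg_left (by norm_num) hi (aseq_anti h)

/-! ### The energy -/

/-- Dominating weight. -/
def gfun (p : ℝ) (x : E2) : ℝ≥0∞ :=
  ∑' k, (seg (k + 1)).indicator (fun _ => ENNReal.ofReal (8 / aseq k) ^ p) x

lemma le_gfun (p : ℝ) {k : ℕ} {x : E2} (hx : x ∈ seg (k + 1)) :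
    ENNReal.ofReal (8 / aseq k) ^ p ≤ gfun p x := by
  have := ENNReal.le_tsum
    (f := fun k => (seg (k + 1)).indicator (fun _ => ENNReal.ofReal (8 / aseq k) ^ p) x) k
  simpa [indicator_of_mem hx, gfun] using this

lemma lintegral_gfun (p : ℝ) (hp : 0 < p) : ∫⁻ x, gfun p x ∂μH[1] < ⊤ := by
  unfold gfun
  rw [lintegral_tsum fun k => (measurable_const.indicator (measurable_seg _)).aemeasurable]
  refine lt_of_le_of_lt (ENNReal.tsum_le_tsum fun k => ?_) (summable_w p).tsum_ofReal_lt_top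
  have hk := aseq_pos k
  rw [lintegral_indicator_const (measurable_seg _), ENNReal.ofReal_mul (by positivity),
    ENNReal.ofReal_rpow_of_nonneg (by positivity) hp.le]
  gcongr
  exact measure_seg _

lemma kappaI_bound (p : ℝ) (hp : 0 < p) {x y : E2} (hx : x ∈ Fset) (hy : y ∈ Fset) :
    kappaI Fset x y ^ p ≤ gfun p x * gfun p y := by
  obtain ⟨i, hi⟩ := Fset_subset x hx
  obtain ⟨j, hj⟩ := Fset_subset y hy
  have h : kappaI Fset x y ≤ ENNReal.ofReal (8 / aseq i) * ENNReal.ofReal (8 / aseq j) := by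
    unfold kappaI
    refine iSup₂_le fun z hz => ?_
    obtain ⟨k, hk⟩ := Fset_subset z hz
    exact kappa_bound hi hj hk
  calc _ ≤ (ENNReal.ofReal (8 / aseq i) * ENNReal.ofReal (8 / aseq j)) ^ p := by gcongr
    _ = _ := ENNReal.mul_rpow_of_nonneg _ _ hp.le
    _ ≤ _ := mul_le_mul' (le_gfun p hi) (le_gfun p hj)

lemma measurable_gfun (p : ℝ) : Measurable (gfun p) :=
  Measurable.tsum fun _ => measurable_const.indicator (measurable_seg _)

lemma measurable_Fset : MeasurableSet Fset := by
  have h (i : Fin 2) : Measurable fun q : E2 => q i :=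
    (EuclideanSpace.proj (𝕜 := ℝ) i).continuous.measurable
  unfold Fset
  refine MeasurableSet.union ?_ ?_ <;> simp only [ofPred_exists] <;>
    refine MeasurableSet.iUnion fun n => ?_
  · exact (MeasurableSet.const _).inter
      ((measurableSet_eq_fun (h 1) measurable_const).inter ((h 0) measurableSet_Icc))
  · exact (MeasurableSet.const _).inter
      ((measurableSet_eq_fun (h 0) measurable_const).inter ((h 1) measurableSet_Icc))

theorem Fset_energyI_lt_top (p : ℝ) (hp : 0 < p) : energyI p 1 Fset < ⊤ := by
  have hG := lintegral_gfun p hp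
  set G := ∫⁻ x, gfun p x ∂μH[1] with hGdef
  have inner (y : E2) (hy : y ∈ Fset) :
      ∫⁻ x in Fset, kappaI Fset x y ^ p ∂μH[1] ≤ G * gfun p y := by
    calc _ ≤ ∫⁻ x in Fset, gfun p x * gfun p y ∂μH[1] :=
          setLIntegral_mono' measurable_Fset fun x hx => kappaI_bound p hp hx hy
      _ ≤ ∫⁻ x, gfun p x * gfun p y ∂μH[1] := setLIntegral_le_lintegral _ _
      _ = _ := lintegral_mul_const _ (measurable_gfun p)
  unfold energyI
  calc _ ≤ ∫⁻ y in Fset, G * gfun p y ∂μH[1] := setLIntegral_mono' measurable_Fset inner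
    _ ≤ ∫⁻ y, G * gfun p y ∂μH[1] := setLIntegral_le_lintegral _ _
    _ = G * G := lintegral_const_mul _ (measurable_gfun p)
    _ < ⊤ := ENNReal.mul_lt_top hG hG

end
end

section
/- Let α ∈ [1,∞), p ∈ (0,∞) and X ⊂ ℝⁿ. If U_p^α(X) < ∞, or I_p^α(X) < ∞, or M_p^α(X) < ∞, then H^α(X ∩ B̄_R(x)) < ∞ for every x ∈ ℝⁿ and every R > 0. -/
open MeasureTheory Metric Set Filter
open scoped ENNReal Topology Classical

noncomputable section

/-- Near a point `x₀` not collinear with `y, z`, the curvature is bounded below. -/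
lemma kappa_lower_near {n : ℕ} (x₀ y z : EuclideanSpace ℝ (Fin n)) (hxy : y ≠ x₀)
    (hz : z ∉ lineThrough x₀ y) :
    ∃ c : ℝ, 0 < c ∧ ∀ᶠ x in 𝓝 x₀, ENNReal.ofReal c ≤ kappa x y z := by
  have hzx : z ≠ x₀ := by
    rintro rfl
    exact hz ⟨0, by simp⟩
  have hzy : y ≠ z := by
    rintro rfl
    exact hz ⟨1, by simp⟩
  set g : EuclideanSpace ℝ (Fin n) → ℝ :=
    fun x => ‖z - y‖ ^ 2 * ‖x - y‖ ^ 2 - (inner ℝ (z - y) (x - y)) ^ 2 with hg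
  have hb0 : x₀ - y ≠ 0 := sub_ne_zero.2 hxy.symm
  have key : ∀ x : EuclideanSpace ℝ (Fin n), ∀ s : ℝ,
      g x ≤ ‖(z - y) - s • (x - y)‖ ^ 2 * ‖x - y‖ ^ 2 ∧
      ‖(z - y) - s • (x - y)‖ ^ 2 * ‖x - y‖ ^ 2 =
        g x + (s * ‖x - y‖ ^ 2 - inner ℝ (z - y) (x - y)) ^ 2 := by
    intro x s
    have h2 : ‖(z - y) - s • (x - y)‖ ^ 2 * ‖x - y‖ ^ 2 =
        g x + (s * ‖x - y‖ ^ 2 - inner ℝ (z - y) (x - y)) ^ 2 := by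
      rw [norm_sub_sq_real, inner_smul_right, norm_smul, mul_pow, Real.norm_eq_abs, sq_abs, hg]
      ring
    exact ⟨by rw [h2]; nlinarith [sq_nonneg (s * ‖x - y‖ ^ 2 - inner ℝ (z - y) (x - y))], h2⟩
  have hgpos : 0 < g x₀ := by
    have hn : 0 < ‖x₀ - y‖ := norm_pos_iff.2 hb0
    set s := inner ℝ (z - y) (x₀ - y) / ‖x₀ - y‖ ^ 2 with hs
    have h := (key x₀ s).2
    have h0 : s * ‖x₀ - y‖ ^ 2 - inner ℝ (z - y) (x₀ - y) = 0 := by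
      rw [hs]; field_simp; simp
    rw [h0] at h
    have h1 : (z - y) - s • (x₀ - y) ≠ 0 := by
      intro h1
      apply hz
      refine ⟨1 - s, ?_⟩
      have : z = y + s • (x₀ - y) := by
        rw [sub_eq_zero] at h1
        rw [← h1]; abel
      rw [this]
      module
    have h2 : 0 < ‖(z - y) - s • (x₀ - y)‖ := norm_pos_iff.2 h1
    have : 0 < ‖(z - y) - s • (x₀ - y)‖ ^ 2 * ‖x₀ - y‖ ^ 2 := by positivity
    linarith
  have hgc : Continuous g := by
    rw [hg]; fun_prop
  set h : EuclideanSpace ℝ (Fin n) → ℝ :=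
    fun x => 2 * (√(g x) / ‖x - y‖) / (‖x - z‖ * ‖y - z‖) with hh
  have n1 : 0 < ‖x₀ - y‖ := norm_pos_iff.2 hb0
  have n2 : 0 < ‖x₀ - z‖ := norm_pos_iff.2 (sub_ne_zero.2 hzx.symm)
  have n3 : 0 < ‖y - z‖ := norm_pos_iff.2 (sub_ne_zero.2 hzy)
  have hpos : 0 < h x₀ := by
    have := Real.sqrt_pos.2 hgpos
    simp only [hh]; positivity
  have hc : ContinuousAt h x₀ := by
    have c1 : ContinuousAt (fun x => √(g x)) x₀ := (Real.continuous_sqrt.comp hgc).continuousAt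
    have c2 : ContinuousAt (fun x => ‖x - y‖) x₀ := by fun_prop
    have c3 : ContinuousAt (fun x => ‖x - z‖ * ‖y - z‖) x₀ := by fun_prop
    exact (continuousAt_const.mul (c1.div c2 n1.ne')).div c3 (by positivity)
  refine ⟨h x₀ / 2, by positivity, ?_⟩
  have e1 : ∀ᶠ x in 𝓝 x₀, h x₀ / 2 < h x := hc.eventually (lt_mem_nhds (by linarith))
  have e2 : ∀ᶠ x in 𝓝 x₀, x ≠ y := eventually_ne_nhds hxy.symm
  have e3 : ∀ᶠ x in 𝓝 x₀, x ≠ z := eventually_ne_nhds hzx.symm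
  filter_upwards [e1, e2, e3] with x h1 h2 h3
  rw [kappa, if_pos ⟨h2, hzy, h3⟩]
  apply ENNReal.ofReal_le_ofReal
  refine h1.le.trans ?_
  simp only [hh]
  have m1 : 0 < ‖x - y‖ := norm_pos_iff.2 (sub_ne_zero.2 h2)
  have : √(g x) / ‖x - y‖ ≤ Metric.infDist z (lineThrough x y) := by
    have hne : (lineThrough x y).Nonempty := ⟨x, 0, by simp⟩
    refine (Metric.le_infDist hne).2 ?_
    rintro q ⟨t, rfl⟩
    rw [div_le_iff₀ m1]
    apply Real.sqrt_le_iff.2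
    refine ⟨by positivity, ?_⟩
    rw [mul_pow, dist_eq_norm]
    have : z - (x + t • (y - x)) = (z - y) - (1 - t) • (x - y) := by module
    rw [this]
    exact (key x (1 - t)).1
  gcongr

/-- Hausdorff measure of a bounded piece of a line. -/
lemma line_finite {n : ℕ} (α : ℝ) (hα : 1 ≤ α) (x₀ z : EuclideanSpace ℝ (Fin n)) (hz : z ≠ x₀)
    (r : ℝ) : μH[α] (lineThrough x₀ z ∩ Metric.closedBall x₀ r) < ⊤ := by
  have hn : 0 < ‖z - x₀‖ := norm_pos_iff.2 (sub_ne_zero.2 hz)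
  set f : ℝ → EuclideanSpace ℝ (Fin n) := fun t => x₀ + t • (z - x₀) with hf
  have hL : LipschitzWith ‖z - x₀‖₊ f := by
    apply LipschitzWith.of_dist_le_mul
    intro a b
    simp only [hf, dist_eq_norm, coe_nnnorm]
    have : x₀ + a • (z - x₀) - (x₀ + b • (z - x₀)) = (a - b) • (z - x₀) := by module
    rw [this, norm_smul, mul_comm]
  set T := r / ‖z - x₀‖ with hT
  have hsub : lineThrough x₀ z ∩ Metric.closedBall x₀ r ⊆ f '' Icc (-T) T := by
    rintro q ⟨⟨t, rfl⟩, hq⟩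
    refine ⟨t, ?_, rfl⟩
    rw [mem_closedBall, dist_eq_norm, add_sub_cancel_left, norm_smul, Real.norm_eq_abs] at hq
    rw [mem_Icc, ← abs_le, hT, le_div_iff₀ hn]
    exact hq
  have h1 : μH[α] (Icc (-T) T) < ⊤ := by
    refine (Measure.hausdorffMeasure_mono hα (Icc (-T) T)).trans_lt ?_
    rw [hausdorffMeasure_real]
    simp
  refine (measure_mono hsub).trans_lt
    ((hL.lipschitzOnWith.hausdorffMeasure_image_le (by linarith)).trans_lt ?_)
  exact ENNReal.mul_lt_top (ENNReal.rpow_lt_top_of_nonneg (by linarith) (by simp)) h1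

lemma lintegral_top_of {β : Type*} [MeasurableSpace β] (μ : Measure β) (f : β → ℝ≥0∞)
    (s : Set β) (c : ℝ≥0∞) (h : ∀ x ∈ s, c ≤ f x) (hs : MeasurableSet s) (hcs : c * μ s = ⊤) :
    ∫⁻ x, f x ∂μ = ⊤ := by
  rw [eq_top_iff, ← hcs, ← lintegral_indicator_const hs]
  apply lintegral_mono
  intro x
  by_cases hx : x ∈ s <;> simp [hx, h]

theorem finite_energy_implies_finite_measure_on_balls (n : ℕ)
    (X : Set (EuclideanSpace ℝ (Fin n))) (α p : ℝ) (hα : 1 ≤ α) (hp : 0 < p)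
    (hE : energyU p α X < ⊤ ∨ energyI p α X < ⊤ ∨ energyM p α X < ⊤) :
    ∀ x : EuclideanSpace ℝ (Fin n), ∀ R > (0 : ℝ),
      μH[α] (X ∩ Metric.closedBall x R) < ⊤ := by
  intro a R hR
  by_contra hcon
  set μ : Measure (EuclideanSpace ℝ (Fin n)) := (μH[α]).restrict X with hμ
  obtain ⟨x₀, hx₀⟩ : ∃ x₀ : EuclideanSpace ℝ (Fin n), ∀ s ∈ 𝓝 x₀, μ s = ⊤ := by
    by_contra hno
    push Not at hno
    apply hcon
    have := (isCompact_closedBall a R).measure_lt_top_of_nhdsWithin (μ := μ) (by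
      intro x _
      obtain ⟨s, hs, hs'⟩ := hno x
      exact ⟨s, mem_nhdsWithin_of_mem_nhds hs, hs'.lt_top⟩)
    rwa [hμ, Measure.restrict_apply measurableSet_closedBall, inter_comm] at this
  -- complements of lines through `x₀` have infinite measure
  have hclosed : ∀ z, z ≠ x₀ → MeasurableSet (lineThrough x₀ z) := by
    intro z hz
    have : lineThrough x₀ z = (AffineSubspace.mk' x₀ (ℝ ∙ (z - x₀)) : Set _) := by
      ext q
      simp only [lineThrough, mem_setOf_eq, SetLike.mem_coe, AffineSubspace.mem_mk',
        Submodule.mem_span_singleton, vsub_eq_sub]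
      constructor
      · rintro ⟨t, rfl⟩
        exact ⟨t, by simp⟩
      · rintro ⟨t, ht⟩
        exact ⟨t, by rw [ht]; abel⟩
    rw [this]
    exact (AffineSubspace.closed_of_finiteDimensional _).measurableSet
  have hcompl : ∀ z, z ≠ x₀ → μ (lineThrough x₀ z)ᶜ = ⊤ := by
    intro z hz
    have h1 := hx₀ _ (closedBall_mem_nhds x₀ one_pos)
    have h2 : μ (lineThrough x₀ z ∩ closedBall x₀ 1) < ⊤ :=
      (Measure.restrict_apply_le _ _).trans_lt (line_finite α hα x₀ z hz 1)
    have h3 : μ (closedBall x₀ 1) ≤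
        μ (lineThrough x₀ z ∩ closedBall x₀ 1) + μ (lineThrough x₀ z)ᶜ := by
      refine (measure_mono ?_).trans (measure_union_le _ _)
      intro q hq
      by_cases h : q ∈ lineThrough x₀ z
      · exact Or.inl ⟨h, hq⟩
      · exact Or.inr h
    rw [h1, top_le_iff, ENNReal.add_eq_top] at h3
    exact h3.resolve_left h2.ne
  have hexists : ∀ z, z ≠ x₀ → ∃ w ∈ X, w ∉ lineThrough x₀ z := by
    intro z hz
    by_contra hno
    push Not at hno
    have h := hcompl z hz
    rw [hμ, Measure.restrict_apply (hclosed z hz).compl] at h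
    have : (lineThrough x₀ z)ᶜ ∩ X = ∅ := by
      ext q
      simp only [mem_inter_iff, mem_compl_iff, mem_empty_iff_false, iff_false, not_and]
      exact fun h1 h2 => h1 (hno q h2)
    rw [this] at h
    simp at h
  have hpunct : μ {x₀}ᶜ = ⊤ := by
    have hat : μ {x₀} = 0 := by
      have : μH[α] ({x₀} : Set (EuclideanSpace ℝ (Fin n))) = 0 := by
        haveI := Measure.noAtoms_hausdorff (EuclideanSpace ℝ (Fin n)) (d := α) (by linarith)
        exact measure_singleton x₀
      exact le_antisymm ((Measure.restrict_apply_le _ _).trans this.le) bot_le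
    have h1 := hx₀ univ univ_mem
    rw [← union_compl_self {x₀}] at h1
    have := measure_union_le (μ := μ) {x₀} ({x₀}ᶜ)
    rw [h1, hat, zero_add] at this
    exact top_le_iff.1 this
  -- integrals of functions bounded below near `x₀`
  have hint : ∀ (y z : EuclideanSpace ℝ (Fin n)) (f : EuclideanSpace ℝ (Fin n) → ℝ≥0∞),
      y ≠ x₀ → z ∉ lineThrough x₀ y → (∀ x, kappa x y z ≤ f x) → ∫⁻ x, f x ^ p ∂μ = ⊤ := by
    intro y z f hy hz hf
    obtain ⟨c, hc, hev⟩ := kappa_lower_near x₀ y z hy hz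
    obtain ⟨s, hs, hso, hsx⟩ := _root_.eventually_nhds_iff.1 hev
    refine lintegral_top_of μ _ s (ENNReal.ofReal c ^ p) ?_ hso.measurableSet ?_
    · intro x hx
      exact ENNReal.rpow_le_rpow ((hs x hx).trans (hf x)) hp.le
    · rw [hx₀ s (hso.mem_nhds hsx), ENNReal.mul_top]
      exact (ENNReal.rpow_pos (ENNReal.ofReal_pos.2 hc) ENNReal.ofReal_ne_top).ne'
  rcases hE with h | h | h
  · -- a point of `X` different from `x₀`
    obtain ⟨v, hvX, hv⟩ : ∃ v ∈ X, v ≠ x₀ := by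
      by_contra hno
      push Not at hno
      rw [hμ, Measure.restrict_apply (measurableSet_singleton x₀).compl] at hpunct
      have : ({x₀}ᶜ : Set (EuclideanSpace ℝ (Fin n))) ∩ X = ∅ := by
        ext q
        simp only [mem_inter_iff, mem_compl_iff, mem_empty_iff_false, iff_false, not_and]
        exact fun h1 h2 => h1 (hno q h2)
      rw [this] at hpunct
      simp at hpunct
    obtain ⟨w, hwX, hw⟩ := hexists v hv
    refine h.ne (hint v w (kappaG X) hv hw fun x => ?_)
    exact le_iSup₂_of_le v hvX (le_iSup₂_of_le w hwX le_rfl)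
  · refine h.ne (lintegral_top_of μ _ {x₀}ᶜ ⊤ ?_ (measurableSet_singleton x₀).compl ?_)
    · intro y hy
      obtain ⟨w, hwX, hw⟩ := hexists y hy
      exact (hint y w (fun x => kappaI X x y) hy hw fun x => le_iSup₂_of_le w hwX le_rfl).ge
    · rw [hpunct]; simp
  · refine h.ne (lintegral_top_of μ _ {x₀}ᶜ ⊤ ?_ (measurableSet_singleton x₀).compl ?_)
    · intro z hz
      refine (lintegral_top_of μ _ (lineThrough x₀ z)ᶜ ⊤ ?_ (hclosed z hz).compl ?_).ge
      · intro y hy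
        have hyx : y ≠ x₀ := by
          rintro rfl
          exact hy ⟨0, by simp⟩
        refine (hint y z (fun x => kappa x y z) hyx ?_ fun x => le_rfl).ge
        rintro ⟨t, ht⟩
        have ht0 : t ≠ 0 := by
          rintro rfl
          exact hz (by simpa using ht)
        apply hy
        refine ⟨t⁻¹, ?_⟩
        rw [ht, add_sub_cancel_left, smul_smul, inv_mul_cancel₀ ht0, one_smul]
        abel
      · rw [hcompl z hz]; simp
    · rw [hpunct]; simp

end
end

section
/- Let X ⊂ ℝⁿ be an H¹-measurable set and p ∈ [1,∞). If U_p^1(X) < ∞, then X is 1-rectifiable, i.e. there exist countably many Lipschitz maps f_i : ℝ → ℝⁿ such that H¹(X \ ⋃_i f_i(ℝ)) = 0. -/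
open MeasureTheory Metric Set Filter
open scoped ENNReal Topology Classical

noncomputable section

lemma infDist_lineThrough_eq {n : ℕ} (x v w : EuclideanSpace ℝ (Fin n)) (h : x ≠ v) :
    Metric.infDist w (lineThrough x v) =
      ‖(w - v) - (inner ℝ (x - v) (w - v) / ‖x - v‖ ^ 2) • (x - v)‖ := by
  set u := x - v with hu
  set z := w - v with hz
  have hu0 : u ≠ 0 := sub_ne_zero.mpr h
  have hun : ‖u‖ ≠ 0 := norm_ne_zero_iff.mpr hu0
  set c : ℝ := inner ℝ u z / ‖u‖ ^ 2 with hc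
  have horth : inner ℝ (z - c • u) u = 0 := by
    rw [inner_sub_left, real_inner_smul_left, real_inner_self_eq_norm_sq, hc,
      div_mul_cancel₀ _ (pow_ne_zero 2 hun), real_inner_comm, sub_self]
  apply le_antisymm
  · have hmem : x + (1 - c) • (v - x) ∈ lineThrough x v := ⟨1 - c, rfl⟩
    refine (Metric.infDist_le_dist_of_mem hmem).trans (le_of_eq ?_)
    rw [dist_eq_norm]
    congr 1
    rw [hz, hu]
    module
  · have hne : (lineThrough x v).Nonempty := ⟨x, 0, by simp⟩
    refine (Metric.le_infDist hne).2 ?_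
    rintro p ⟨t, rfl⟩
    rw [dist_eq_norm]
    have e : w - (x + t • (v - x)) = (z - c • u) + (c - (1 - t)) • u := by
      rw [hz, hu]; module
    rw [e]
    have h1 : inner ℝ (z - c • u) ((c - (1 - t)) • u) = 0 := by
      rw [real_inner_smul_right, horth, mul_zero]
    have h2 := norm_add_sq_real (z - c • u) ((c - (1 - t)) • u)
    rw [h1] at h2
    apply le_of_sq_le_sq _ (norm_nonneg _)
    nlinarith [sq_nonneg ‖(c - (1 - t)) • u‖]

lemma kappa_lsc {n : ℕ} (v w : EuclideanSpace ℝ (Fin n)) :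
    LowerSemicontinuous (fun x => kappa x v w) := by
  intro x
  by_cases h : x ≠ v ∧ v ≠ w ∧ x ≠ w
  · apply ContinuousAt.lowerSemicontinuousAt
    have hev : (fun y => kappa y v w) =ᶠ[𝓝 x] fun y => ENNReal.ofReal
        (2 * ‖(w - v) - (inner ℝ (y - v) (w - v) / ‖y - v‖ ^ 2) • (y - v)‖ /
          (‖y - w‖ * ‖v - w‖)) := by
      filter_upwards [isOpen_ne.mem_nhds h.1, isOpen_ne.mem_nhds h.2.2] with y h1 h2
      rw [kappa, if_pos ⟨h1, h.2.1, h2⟩, infDist_lineThrough_eq y v w h1]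
    refine ContinuousAt.congr ?_ hev.symm
    have n1 : ‖x - v‖ ^ 2 ≠ 0 := pow_ne_zero 2 (norm_ne_zero_iff.mpr (sub_ne_zero.mpr h.1))
    have n2 : ‖x - w‖ * ‖v - w‖ ≠ 0 := mul_ne_zero (norm_ne_zero_iff.mpr (sub_ne_zero.mpr h.2.2))
      (norm_ne_zero_iff.mpr (sub_ne_zero.mpr h.2.1))
    refine ENNReal.continuous_ofReal.continuousAt.comp ?_
    refine ContinuousAt.div ?_ (by fun_prop) n2
    refine continuousAt_const.mul (ContinuousAt.norm ?_)
    have hq : ContinuousAt (fun y : EuclideanSpace ℝ (Fin n) =>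
        (inner ℝ (y - v) (w - v) : ℝ) / ‖y - v‖ ^ 2) x :=
      ContinuousAt.div (by fun_prop) (by fun_prop) n1
    have hs : ContinuousAt (fun y : EuclideanSpace ℝ (Fin n) => y - v) x := by fun_prop
    exact continuousAt_const.sub (hq.smul hs)
  · intro y hy
    simp [kappa, h] at hy

lemma kappaG_measurable {n : ℕ} (X : Set (EuclideanSpace ℝ (Fin n))) :
    Measurable (kappaG X) := by
  have : LowerSemicontinuous (kappaG X) :=
    lowerSemicontinuous_biSup fun v _ => lowerSemicontinuous_biSup fun w _ => kappa_lsc v w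
  exact this.measurable

lemma near_line {n : ℕ} (X : Set (EuclideanSpace ℝ (Fin n))) (M : ℕ)
    (x v w : EuclideanSpace ℝ (Fin n)) (hx : kappaG X x ≤ M) (hv : v ∈ X) (hw : w ∈ X)
    (hxv : x ≠ v) (hd : ‖v - w‖ ≤ 1 / (8 * (M + 1))) :
    ∃ t : ℝ, ‖(w - x) - t • (v - x)‖ ≤ 1 / 8 * ‖w - x‖ := by
  by_cases h1 : v = w
  · exact ⟨1, by simp [h1]⟩
  by_cases h2 : x = w
  · exact ⟨0, by simp [h2]⟩
  have hk : kappa x v w ≤ M :=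
    le_trans (le_iSup₂_of_le (f := fun v _ => ⨆ w ∈ X, kappa x v w) v hv
      (le_iSup₂_of_le (f := fun w _ => kappa x v w) w hw le_rfl)) hx
  rw [kappa, if_pos ⟨hxv, h1, h2⟩, ENNReal.ofReal_le_natCast] at hk
  have p1 : 0 < ‖x - w‖ := norm_pos_iff.mpr (sub_ne_zero.mpr h2)
  have p2 : 0 < ‖v - w‖ := norm_pos_iff.mpr (sub_ne_zero.mpr h1)
  rw [div_le_iff₀ (mul_pos p1 p2)] at hk
  have hM : (0 : ℝ) ≤ M := Nat.cast_nonneg M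
  have h3 : (M : ℝ) * ‖v - w‖ ≤ 1 / 8 := by
    rw [le_div_iff₀ (by positivity)] at hd
    nlinarith
  have h4 : Metric.infDist w (lineThrough x v) < 1 / 8 * ‖x - w‖ := by
    nlinarith [mul_le_mul_of_nonneg_right h3 p1.le]
  have hne : (lineThrough x v).Nonempty := ⟨x, 0, by simp⟩
  obtain ⟨q, ⟨t, rfl⟩, hq⟩ := (Metric.infDist_lt_iff hne).1 h4
  refine ⟨t, ?_⟩
  rw [dist_eq_norm] at hq
  rw [norm_sub_rev w x]
  refine le_trans (le_of_eq ?_) hq.le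
  congr 1
  module

lemma piece {n : ℕ} (X A : Set (EuclideanSpace ℝ (Fin n))) (M : ℕ) (hAX : A ⊆ X)
    (hA : ∀ x ∈ A, kappaG X x ≤ M) (hd : ∀ x ∈ A, ∀ y ∈ A, ‖x - y‖ ≤ 1 / (8 * (M + 1))) :
    ∃ f : ℝ → EuclideanSpace ℝ (Fin n), (∃ K : NNReal, LipschitzWith K f) ∧ A ⊆ Set.range f := by
  by_cases hs : A.Subsingleton
  · rcases hs.eq_empty_or_singleton with h | ⟨a, h⟩
    · exact ⟨fun _ => 0, ⟨0, LipschitzWith.const _⟩, by simp [h]⟩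
    · exact ⟨fun _ => a, ⟨0, LipschitzWith.const _⟩, by simp [h]⟩
  rw [Set.not_subsingleton_iff] at hs
  obtain ⟨a, ha, b, hb, hab⟩ := hs
  have near : ∀ x ∈ A, ∀ v ∈ A, ∀ w ∈ A, x ≠ v →
      ∃ t : ℝ, ‖(w - x) - t • (v - x)‖ ≤ 1 / 8 * ‖w - x‖ := fun x hx v hv w hw hxv =>
    near_line X M x v w (hA x hx) (hAX hv) (hAX hw) hxv (hd v hv w hw)
  have par : ∀ c ∈ A, ∀ d ∈ A, ∃ k : ℝ, ‖(c - d) - k • (b - a)‖ ≤ 3 / 10 * ‖c - d‖ := by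
    intro c hc d hd'
    by_cases hda : d = a
    · obtain ⟨t, ht⟩ := near a ha b hb c hc hab
      subst hda
      exact ⟨t, ht.trans (by nlinarith [norm_nonneg (c - d)])⟩
    obtain ⟨s, hs⟩ := near d hd' a ha c hc hda
    obtain ⟨t, ht⟩ := near a ha b hb d hd' hab
    refine ⟨-s * t, ?_⟩
    have e : (c - d) - (-s * t) • (b - a) =
        ((c - d) - s • (a - d)) + (-s) • ((d - a) - t • (b - a)) := by module
    have h1 : ‖s • (a - d)‖ ≤ 9 / 8 * ‖c - d‖ := by
      have : s • (a - d) = (c - d) - ((c - d) - s • (a - d)) := by abel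
      rw [this]
      refine (norm_sub_le _ _).trans ?_
      linarith
    rw [norm_smul, Real.norm_eq_abs, norm_sub_rev] at h1
    rw [e]
    refine (norm_add_le _ _).trans ?_
    rw [norm_smul, Real.norm_eq_abs, abs_neg]
    nlinarith [mul_le_mul_of_nonneg_left ht (abs_nonneg s), norm_nonneg (c - d)]
  have hE : 0 < ‖b - a‖ := norm_pos_iff.mpr (sub_ne_zero.mpr hab.symm)
  have key : ∀ c ∈ A, ∀ d ∈ A,
      ‖c - d‖ ≤ 3 / ‖b - a‖ * |inner ℝ (b - a) c - inner ℝ (b - a) d| := by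
    intro c hc d hd'
    obtain ⟨k, hk⟩ := par c hc d hd'
    rw [← inner_sub_right]
    set r := (c - d) - k • (b - a) with hr
    have e : c - d = k • (b - a) + r := by rw [hr]; abel
    have h1 : inner ℝ (b - a) (c - d) = k * ‖b - a‖ ^ 2 + inner ℝ (b - a) r := by
      rw [e, inner_add_right, real_inner_smul_right, real_inner_self_eq_norm_sq]
    have h2 : ‖c - d‖ ≤ |k| * ‖b - a‖ + ‖r‖ := by
      have := norm_add_le (k • (b - a)) r
      rwa [← e, norm_smul, Real.norm_eq_abs] at this
    have h3 : |inner ℝ (b - a) r| ≤ ‖b - a‖ * ‖r‖ := abs_real_inner_le_norm _ _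
    have h4 : |k| * ‖b - a‖ ^ 2 ≤ |inner ℝ (b - a) (c - d)| + ‖b - a‖ * ‖r‖ := by
      have : k * ‖b - a‖ ^ 2 = inner ℝ (b - a) (c - d) - inner ℝ (b - a) r := by linarith
      have h5 : |k| * ‖b - a‖ ^ 2 = |inner ℝ (b - a) (c - d) - inner ℝ (b - a) r| := by
        rw [← this, abs_mul, abs_of_nonneg (sq_nonneg ‖b - a‖)]
      rw [h5]
      exact (abs_sub _ _).trans (by linarith)
    rw [div_mul_eq_mul_div, le_div_iff₀ hE]
    nlinarith [mul_le_mul_of_nonneg_left h2 hE.le, mul_le_mul_of_nonneg_left hk hE.le,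
      mul_nonneg hE.le (norm_nonneg (c - d))]
  let g : EuclideanSpace ℝ (Fin n) → ℝ := fun x => inner ℝ (b - a) x
  have hinj : Set.InjOn g A := by
    intro c hc d hd' h
    have := key c hc d hd'
    simp only [g] at h
    rw [h, sub_self, abs_zero, mul_zero] at this
    exact sub_eq_zero.mp (norm_le_zero_iff.mp this)
  have hleft := hinj.leftInvOn_invFunOn
  have hlip : LipschitzOnWith (3 / ‖b - a‖).toNNReal (Function.invFunOn g A) (g '' A) := by
    apply LipschitzOnWith.of_dist_le_mul
    rintro _ ⟨c, hc, rfl⟩ _ ⟨d, hd', rfl⟩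
    rw [hleft hc, hleft hd', Real.coe_toNNReal _ (by positivity), dist_eq_norm, Real.dist_eq]
    exact key c hc d hd'
  obtain ⟨f, hf, hfe⟩ := hlip.extend_finite_dimension
  refine ⟨f, ⟨_, hf⟩, fun c hc => ⟨g c, ?_⟩⟩
  rw [← hfe ⟨c, hc, rfl⟩, hleft hc]

theorem finite_energyU_implies_rectifiable (n : ℕ) (X : Set (EuclideanSpace ℝ (Fin n)))
    (hX : MeasureTheory.NullMeasurableSet X μH[1]) (p : ℝ) (hp : 1 ≤ p)
    (hE : energyU p 1 X < ⊤) :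
    ∃ f : ℕ → ℝ → EuclideanSpace ℝ (Fin n),
      (∀ i, ∃ K : NNReal, LipschitzWith K (f i)) ∧
      μH[1] (X \ ⋃ i, Set.range (f i)) = 0 := by
  have hm := kappaG_measurable X
  have hae : ∀ᵐ x ∂(μH[1] : Measure (EuclideanSpace ℝ (Fin n))), x ∈ X → kappaG X x < ⊤ := by
    rw [← ae_restrict_iff (measurableSet_lt hm measurable_const)]
    filter_upwards [ae_lt_top (hm.pow_const p) hE.ne] with x hx
    by_contra h
    rw [not_lt, top_le_iff] at h
    rw [h, ENNReal.top_rpow_of_pos (by linarith)] at hx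
    exact lt_irrefl _ hx
  let A : ℕ → Set (EuclideanSpace ℝ (Fin n)) := fun k =>
    {x | x ∈ X ∧ kappaG X x ≤ (k.unpair.1 : ℕ) ∧
      dist x (TopologicalSpace.denseSeq _ k.unpair.2) < 1 / (16 * ((k.unpair.1 : ℝ) + 1))}
  have hpiece : ∀ k, ∃ f : ℝ → EuclideanSpace ℝ (Fin n),
      (∃ K : NNReal, LipschitzWith K f) ∧ A k ⊆ Set.range f := by
    intro k
    refine piece X (A k) k.unpair.1 (fun x hx => hx.1) (fun x hx => hx.2.1) ?_
    intro x hx y hy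
    rw [← dist_eq_norm]
    have h1 := dist_triangle_right x y (TopologicalSpace.denseSeq _ k.unpair.2)
    have h2 := hx.2.2
    have h3 := hy.2.2
    have h4 : (1 : ℝ) / (8 * ((k.unpair.1 : ℝ) + 1)) =
        1 / (16 * ((k.unpair.1 : ℝ) + 1)) + 1 / (16 * ((k.unpair.1 : ℝ) + 1)) := by
      field_simp; norm_num
    linarith
  choose f hf hfA using hpiece
  refine ⟨f, hf, measure_mono_null ?_ hae⟩
  rintro x ⟨hxX, hx⟩ hcon
  have hlt := hcon hxX
  obtain ⟨M, hM⟩ := ENNReal.exists_nat_gt hlt.ne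
  obtain ⟨i, hi⟩ := (TopologicalSpace.denseRange_denseSeq
    (EuclideanSpace ℝ (Fin n))).exists_dist_lt x
      (show (0 : ℝ) < 1 / (16 * ((M : ℝ) + 1)) by positivity)
  apply hx
  refine Set.mem_iUnion.2 ⟨Nat.pair M i, hfA _ ?_⟩
  simp only [A, Nat.unpair_pair, Set.mem_ofPred_eq]
  exact ⟨hxX, hM.le, hi⟩

end
end

section
/- Let x, y ∈ ℝⁿ \ {0} with x ≠ y, and suppose the angle ε = ∠(x, 0, y) between x and y lies in (0, π). Then dist(L_{x,y}, 0) ≥ (sin ε / 2)·min(‖x‖, ‖y‖), where L_{x,y} denotes the affine line through x and y. -/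
open MeasureTheory Metric Set Filter
open scoped ENNReal Topology Classical

noncomputable section

theorem dist_line_ge_of_angle (n : ℕ) (x y : EuclideanSpace ℝ (Fin n))
    (hx : x ≠ 0) (hy : y ≠ 0) (hxy : x ≠ y)
    (hang : InnerProductGeometry.angle x y ∈ Set.Ioo 0 Real.pi) :
    Real.sin (InnerProductGeometry.angle x y) / 2 * min ‖x‖ ‖y‖ ≤
      Metric.infDist 0 (lineThrough x y) := by
  have hne : (lineThrough x y).Nonempty := ⟨x, 0, by simp⟩
  rw [Metric.le_infDist hne]
  rintro p ⟨t, rfl⟩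
  rw [dist_zero_left]
  have hs0 := InnerProductGeometry.sin_angle_nonneg x y
  have hsc := Real.sin_sq_add_cos_sq (InnerProductGeometry.angle x y)
  have hc := InnerProductGeometry.cos_angle_mul_norm_mul_norm x y
  have ha : 0 < ‖x‖ := norm_pos_iff.2 hx
  have hb : 0 < ‖y‖ := norm_pos_iff.2 hy
  have hP : ‖x + t • (y - x)‖ ^ 2
      = (1 - t) ^ 2 * ‖x‖ ^ 2 + 2 * t * (1 - t) * inner ℝ x y + t ^ 2 * ‖y‖ ^ 2 := by
    rw [norm_add_sq_real, norm_smul, mul_pow, norm_sub_sq_real, inner_smul_right, inner_sub_right,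
      real_inner_self_eq_norm_sq, real_inner_comm x y, Real.norm_eq_abs, sq_abs]
    ring
  have hc1 : -(‖x‖ * ‖y‖) ≤ inner ℝ x y := neg_le_of_abs_le (abs_real_inner_le_norm x y)
  have hp0 := norm_nonneg (x + t • (y - x))
  generalize ‖x + t • (y - x)‖ = P at *
  generalize Real.sin (InnerProductGeometry.angle x y) = s at *
  generalize Real.cos (InnerProductGeometry.angle x y) = k at *
  generalize inner ℝ x y = c at *
  generalize ‖x‖ = a at *
  generalize ‖y‖ = b at *
  have h1 : P ^ 2 * (a ^ 2 + b ^ 2 - 2 * c) = (s * (a * b)) ^ 2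
      + (t * b ^ 2 - (1 - t) * a ^ 2 + (1 - 2 * t) * c) ^ 2 := by
    have h2 : (s * (a * b)) ^ 2 = a ^ 2 * b ^ 2 - c ^ 2 := by
      rw [← hc]; linear_combination (a * b) ^ 2 * hsc
    rw [h2, hP]; ring
  have h3 : (s * (a * b)) ^ 2 ≤ (P * (a + b)) ^ 2 := by
    nlinarith [mul_nonneg (sq_nonneg P) (by linarith : (0:ℝ) ≤ c + a * b),
      sq_nonneg (t * b ^ 2 - (1 - t) * a ^ 2 + (1 - 2 * t) * c)]
  have h4 : s * (a * b) ≤ P * (a + b) :=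
    le_of_abs_le (abs_le_of_sq_le_sq h3 (by positivity))
  have h5 : a * b = min a b * max a b := (min_mul_max a b).symm
  have h6 : a + b ≤ 2 * max a b := by linarith [le_max_left a b, le_max_right a b]
  have hm : 0 < max a b := lt_max_of_lt_left ha
  have h7 : s * min a b * max a b ≤ (2 * P) * max a b := by
    rw [h5] at h4
    nlinarith [mul_le_mul_of_nonneg_left h6 hp0]
  linarith [le_of_mul_le_mul_right h7 hm]

end
end

section
/- Let X ⊂ ℝⁿ, α ∈ (0,∞) and x ∈ ℝⁿ with Θ_*^α(X,x) > 0. Then there exist ρ > 0 and a map s : (0,ρ) → 𝕊^{n−1} such that for every ε > 0 there is a constant c(ε) > 0 with c(ε)·r^α ≤ H^α(X ∩ B̄_r(x) ∩ C_{s(r),ε}(x)) for all r ∈ (0,ρ). -/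
open MeasureTheory Metric Set Filter
open scoped ENNReal Topology Classical

noncomputable section

/-- Finite nets of the sphere with respect to the angle. -/
theorem exists_angle_net (n : ℕ) (δ : ℝ) (hδ : 0 < δ) :
    ∃ T : Finset (EuclideanSpace ℝ (Fin n)), ∀ v : EuclideanSpace ℝ (Fin n), v ≠ 0 →
      ∃ t ∈ T, InnerProductGeometry.angle v t < δ := by
  have hc : IsCompact (Metric.sphere (0 : EuclideanSpace ℝ (Fin n)) 1) := isCompact_sphere _ _
  obtain ⟨T, -, hT⟩ := hc.elim_nhds_subcover
    (fun t => {v | InnerProductGeometry.angle v t < δ}) (by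
      intro t ht
      have ht0 : t ≠ 0 := by
        rintro rfl
        simp at ht
      have h1 : ContinuousAt (fun v => InnerProductGeometry.angle v t) t :=
        (InnerProductGeometry.continuousAt_angle (x := (t, t)) ht0 ht0).comp
          (f := fun v => (v, t)) (by fun_prop)
      have h2 : InnerProductGeometry.angle t t < δ := by
        rw [InnerProductGeometry.angle_self ht0]; exact hδ
      exact h1.eventually (gt_mem_nhds h2))
  refine ⟨T, fun v hv => ?_⟩
  have hv' : ‖v‖⁻¹ • v ∈ Metric.sphere (0 : EuclideanSpace ℝ (Fin n)) 1 := by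
    simp [norm_smul, hv]
  have h := hT hv'
  simp only [mem_iUnion, mem_setOf_eq] at h
  obtain ⟨t, ht, h⟩ := h
  refine ⟨t, ht, ?_⟩
  rwa [InnerProductGeometry.angle_smul_left_of_pos _ _ (by positivity)] at h

theorem uniform_cone_estimate_of_positive_lower_density (n : ℕ)
    (X : Set (EuclideanSpace ℝ (Fin n))) (α : ℝ) (hα : 0 < α)
    (x : EuclideanSpace ℝ (Fin n)) (hd : 0 < lowerDensity α X x) :
    ∃ ρ > (0 : ℝ), ∃ s : ℝ → EuclideanSpace ℝ (Fin n),
      (∀ r ∈ Set.Ioo (0 : ℝ) ρ, ‖s r‖ = 1) ∧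
      ∀ ε > (0 : ℝ), ∃ c > (0 : ℝ), ∀ r ∈ Set.Ioo (0 : ℝ) ρ,
        ENNReal.ofReal (c * r ^ α) ≤
          μH[α] (X ∩ Metric.closedBall x r ∩ cone (s r) ε x) := by
  obtain ⟨m, hm0, hm⟩ := exists_between hd
  have hev := Filter.eventually_lt_of_lt_liminf hm
  obtain ⟨ρ, hρ, hsub⟩ := mem_nhdsGT_iff_exists_Ioo_subset.1 hev
  have hρ0 : (0 : ℝ) < ρ := hρ
  choose T hT using fun k : ℕ => exists_angle_net n (1 / ((k : ℝ) + 1)) (by positivity)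
  obtain ⟨w, hw0, hw⟩ := ENNReal.exists_pos_sum_of_countable' hm0.ne' (Σ k : ℕ, T k)
  have hna : NullSingletonClass (μH[α] : Measure (EuclideanSpace ℝ (Fin n))) :=
    Measure.nullSingletonClass_hausdorff _ hα
  let P : ℝ → (Σ k : ℕ, T k) → Set (EuclideanSpace ℝ (Fin n)) := fun r i =>
    {y | y ∈ X ∩ Metric.closedBall x r ∧ y ≠ x ∧
      InnerProductGeometry.angle (y - x) (i.2 : EuclideanSpace ℝ (Fin n)) < 1 / ((i.1 : ℝ) + 1)}
  -- a good point at each scale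
  have key : ∀ r ∈ Set.Ioo (0 : ℝ) ρ, ∃ y, y ≠ x ∧ y ∈ X ∩ Metric.closedBall x r ∧
      ∀ i, y ∈ P r i → w i * ENNReal.ofReal (2 * r) ^ α ≤ μH[α] (P r i) := by
    intro r hr
    by_contra! hcon
    set q := ENNReal.ofReal (2 * r) ^ α with hq
    have hr2 : 0 < ENNReal.ofReal (2 * r) := ENNReal.ofReal_pos.2 (by linarith [hr.1])
    have hq0 : q ≠ 0 := (ENNReal.rpow_pos hr2 ENNReal.ofReal_ne_top).ne'
    have hqt : q ≠ ⊤ := ENNReal.rpow_ne_top_of_nonneg hα.le ENNReal.ofReal_ne_top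
    have h1 : m < μH[α] (X ∩ Metric.closedBall x r) / q := hsub hr
    have h2 : m * q < μH[α] (X ∩ Metric.closedBall x r) :=
      (ENNReal.lt_div_iff_mul_lt (Or.inl hq0) (Or.inl hqt)).1 h1
    let Q : (Σ k : ℕ, T k) → Set (EuclideanSpace ℝ (Fin n)) := fun i =>
      {y | y ∈ P r i ∧ μH[α] (P r i) < w i * q}
    have hcov : X ∩ Metric.closedBall x r ⊆ {x} ∪ ⋃ i, Q i := by
      intro y hy
      by_cases hyx : y = x
      · exact Or.inl hyx
      · obtain ⟨i, hi, hi2⟩ := hcon y hyx hy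
        exact Or.inr (mem_iUnion.2 ⟨i, hi, hi2⟩)
    have hQ : ∀ i, μH[α] (Q i) ≤ w i * q := by
      intro i
      by_cases h : μH[α] (P r i) < w i * q
      · exact (measure_mono (fun y hy => hy.1)).trans h.le
      · have : Q i = ∅ := by
          ext y; simp [Q, h]
        simp [this]
    have h3 : μH[α] (X ∩ Metric.closedBall x r) ≤ m * q :=
      calc μH[α] (X ∩ Metric.closedBall x r) ≤ μH[α] ({x} ∪ ⋃ i, Q i) := measure_mono hcov
        _ ≤ μH[α] {x} + μH[α] (⋃ i, Q i) := measure_union_le _ _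
        _ = μH[α] (⋃ i, Q i) := by rw [hna.measure_singleton x, zero_add]
        _ ≤ ∑' i, μH[α] (Q i) := measure_iUnion_le _
        _ ≤ ∑' i, w i * q := ENNReal.tsum_le_tsum hQ
        _ = (∑' i, w i) * q := ENNReal.tsum_mul_right
        _ ≤ m * q := by gcongr
    exact absurd h2 (not_lt.2 h3)
  choose! y hyx hyX hy using key
  refine ⟨ρ, hρ0, fun r => ‖y r - x‖⁻¹ • (y r - x), ?_, ?_⟩
  · intro r hr
    have : y r - x ≠ 0 := sub_ne_zero.2 (hyx r hr)
    simp [norm_smul, this]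
  · intro ε hε
    obtain ⟨k, hk⟩ := exists_nat_one_div_lt (half_pos hε)
    have hc : ∃ c : ℝ, 0 < c ∧ ∀ t : T k, ENNReal.ofReal c ≤ w ⟨k, t⟩ := by
      have h1 : ∀ t : T k, ∀ᶠ c : ℝ in 𝓝[>] 0, ENNReal.ofReal c < w ⟨k, t⟩ := by
        intro t
        have h : Tendsto ENNReal.ofReal (𝓝[>] (0 : ℝ)) (𝓝 0) := by
          simpa using (ENNReal.continuous_ofReal.tendsto 0).mono_left nhdsWithin_le_nhds
        exact h.eventually (gt_mem_nhds (hw0 _))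
      obtain ⟨c, hc, hc0⟩ := ((Filter.eventually_all.2 h1).and self_mem_nhdsWithin).exists
      exact ⟨c, hc0, fun t => (hc t).le⟩
    obtain ⟨c, hc0, hc⟩ := hc
    refine ⟨c * 2 ^ α, by positivity, fun r hr => ?_⟩
    have hyx0 : y r - x ≠ 0 := sub_ne_zero.2 (hyx r hr)
    obtain ⟨t, ht, hlt⟩ := hT k (y r - x) hyx0
    have hP := hy r hr ⟨k, ⟨t, ht⟩⟩ ⟨hyX r hr, hyx r hr, hlt⟩
    have hr0 := hr.1
    calc ENNReal.ofReal (c * 2 ^ α * r ^ α)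
        = ENNReal.ofReal c * ENNReal.ofReal (2 * r) ^ α := by
          rw [ENNReal.ofReal_rpow_of_pos (by positivity), ← ENNReal.ofReal_mul hc0.le,
            Real.mul_rpow (by norm_num) hr0.le, mul_assoc]
      _ ≤ w ⟨k, ⟨t, ht⟩⟩ * ENNReal.ofReal (2 * r) ^ α := by
          gcongr
          exact hc _
      _ ≤ _ := hP
      _ ≤ _ := by
          apply measure_mono
          rintro z ⟨hz1, hz2, hz3⟩
          refine ⟨hz1, hz2, min_lt_of_left_lt ?_⟩
          have hpos : 0 < ‖y r - x‖⁻¹ := by positivity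
          rw [InnerProductGeometry.angle_smul_right_of_pos _ _ hpos]
          have htri := InnerProductGeometry.angle_le_angle_add_angle (z - x) t (y r - x)
          rw [InnerProductGeometry.angle_comm t] at htri
          simp only at hz3
          linarith

end
end
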